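/- arXiv:1911.01494 — 3 statements merged into one kernel-verified Lean document; each statement's English description precedes it below -/
import Mathlib

section
/- Let V be a complex inner product space, U : V → V a unitary (linear isometric equivalence), u, v ∈ V vectors, and a, b ∈ ℂ with |a| = |b| = 1 and a ≠ b. If ‖U u − a u‖ ≤ ε₁ and ‖U v − b v‖ ≤ ε₂, then |⟨u, v⟩| ≤ max(‖u‖, ‖v‖)·(ε₁ + ε₂)/|1 − a⁻¹b| + ε₁ε₂/|1 − a⁻¹b|. -/
/-- If `U` is a unitary of a complex inner product space, `a b` are
unit-modulus complex numbers with `a ≠ b`, and `u`, `v` are approximate eigenvectors of `U`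
with eigenvalues `a` and `b` (up to `ε₁`, `ε₂`), then `|⟪u, v⟫|` is small. -/
theorem stmt_0 {V : Type*} [NormedAddCommGroup V] [InnerProductSpace ℂ V]
    (U : V ≃ₗᵢ[ℂ] V) (u v : V) (a b : ℂ)
    (ha : ‖a‖ = 1) (hb : ‖b‖ = 1) (hab : a ≠ b)
    (ε₁ ε₂ : ℝ) (hε₁ : 0 ≤ ε₁) (hε₂ : 0 ≤ ε₂)
    (hu : ‖U u - a • u‖ ≤ ε₁) (hv : ‖U v - b • v‖ ≤ ε₂) :
    ‖(inner ℂ u v : ℂ)‖ ≤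
      max ‖u‖ ‖v‖ * (ε₁ + ε₂) / ‖1 - a⁻¹ * b‖ + ε₁ * ε₂ / ‖1 - a⁻¹ * b‖ := by
  have hconj : (starRingEnd ℂ) a = a⁻¹ := (Complex.inv_eq_conj ha).symm
  have ha0 : a ≠ 0 := by
    intro h
    simp [h] at ha
  have hne : 1 - a⁻¹ * b ≠ 0 := by
    intro h
    apply hab
    have h2 : a * (1 - a⁻¹ * b) = a - b := by
      field_simp
    rw [h, mul_zero] at h2
    exact sub_eq_zero.mp h2.symm
  have hpos : 0 < ‖1 - a⁻¹ * b‖ := norm_pos_iff.mpr hne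
  have key : (1 - a⁻¹ * b) * (inner ℂ u v : ℂ)
      = inner ℂ (U u - a • u) (U v) + inner ℂ (a • u) (U v - b • v) := by
    rw [inner_sub_left, inner_sub_right, U.inner_map_map, inner_smul_left, inner_smul_left,
      inner_smul_right, hconj]
    ring
  have h1 : ‖(inner ℂ (U u - a • u) (U v) : ℂ)‖ ≤ ε₁ * max ‖u‖ ‖v‖ := by
    refine (norm_inner_le_norm _ _).trans ?_
    rw [U.norm_map]
    exact mul_le_mul hu (le_max_right _ _) (norm_nonneg _) hε₁
  have h2 : ‖(inner ℂ (a • u) (U v - b • v) : ℂ)‖ ≤ max ‖u‖ ‖v‖ * ε₂ := by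
    refine (norm_inner_le_norm _ _).trans ?_
    rw [norm_smul, ha, one_mul]
    exact mul_le_mul (le_max_left _ _) hv (norm_nonneg _) ((norm_nonneg u).trans (le_max_left _ _))
  have h3 := norm_add_le (inner ℂ (U u - a • u) (U v) : ℂ) (inner ℂ (a • u) (U v - b • v))
  rw [← key, norm_mul] at h3
  rw [← add_div, le_div_iff₀ hpos]
  nlinarith [mul_nonneg hε₁ hε₂]
end

section
/- Let d be an odd prime, r a primitive root modulo d, ω = exp(2πi/d), η = exp(2πi/(d−1)), and define the matrices A₁, A₂, A₃, A₄, O, U as in the context. Then: (i) each of A₁, A₂, A₃, A₄ is self-adjoint and satisfies A_i² = 1; (ii) A₁A₂ = O; (iii) A₃A₄ = U; (iv) A₄ x_{r^j mod d} = x_{r^{d−1−j} mod d} for every j, i.e. A₄ x_k = x_{k^{−1} mod d} for every nonzero residue k; and (v) (A₃A₄) A₂ (A₄A₃) = A₂. -/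
open Matrix

/-- The nonzero residues modulo `d`, indexing the rows/columns of our matrices. -/
abbrev NzRes (d : ℕ) := {x : ZMod d // x ≠ 0}

/-- `ω = exp(2πi/d)`. -/
noncomputable def omC (d : ℕ) : ℂ := Complex.exp (2 * Real.pi * Complex.I / d)

/-- `η = exp(2πi/(d-1))`. -/
noncomputable def etC (d : ℕ) : ℂ := Complex.exp (2 * Real.pi * Complex.I / ((d : ℂ) - 1))

/-- The standard basis index `x_j` for `j : ℕ` (junk value if `j ≡ 0 mod d`). -/
noncomputable def xv (d : ℕ) [Fact (1 < d)] (j : ℕ) : NzRes d :=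
  if h : (j : ZMod d) ≠ 0 then ⟨(j : ZMod d), h⟩ else ⟨1, one_ne_zero⟩

/-- The vector `u_k = (1/√(d-1)) ∑_{j=0}^{d-2} η^{jk} x_{r^j mod d}`. -/
noncomputable def uvec (d r : ℕ) [Fact (1 < d)] (k : ℕ) : NzRes d → ℂ :=
  fun x => (Real.sqrt ((d : ℝ) - 1) : ℂ)⁻¹ *
    ∑ j ∈ Finset.range (d - 1), etC d ^ (j * k) * (Pi.single (xv d (r ^ j)) (1 : ℂ) : NzRes d → ℂ) x

/-- `A₁ = ∑_{j=1}^{(d-1)/2} (ω^j |x_j⟩⟨x_{d-j}| + ω^{-j} |x_{d-j}⟩⟨x_j|)`. -/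
noncomputable def A1 (d : ℕ) [Fact (1 < d)] : Matrix (NzRes d) (NzRes d) ℂ :=
  ∑ j ∈ Finset.Icc 1 ((d - 1) / 2),
    (omC d ^ j • Matrix.single (xv d j) (xv d (d - j)) (1 : ℂ) +
      (omC d)⁻¹ ^ j • Matrix.single (xv d (d - j)) (xv d j) (1 : ℂ))

/-- `A₂ = ∑_{j=1}^{d-1} |x_j⟩⟨x_{d-j}|`. -/
noncomputable def A2 (d : ℕ) [Fact (1 < d)] : Matrix (NzRes d) (NzRes d) ℂ :=
  ∑ j ∈ Finset.Icc 1 (d - 1), Matrix.single (xv d j) (xv d (d - j)) (1 : ℂ)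

/-- `A₃ = |u₀⟩⟨u₀| + η^{(d-1)/2}|u_{(d-1)/2}⟩⟨u_{(d-1)/2}|
    + ∑_{k=1}^{(d-3)/2} (η^k |u_k⟩⟨u_{d-1-k}| + η^{-k} |u_{d-1-k}⟩⟨u_k|)`. -/
noncomputable def A3 (d r : ℕ) [Fact (1 < d)] : Matrix (NzRes d) (NzRes d) ℂ :=
  Matrix.vecMulVec (uvec d r 0) (star (uvec d r 0)) +
  etC d ^ ((d - 1) / 2) •
    Matrix.vecMulVec (uvec d r ((d - 1) / 2)) (star (uvec d r ((d - 1) / 2))) +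
  ∑ k ∈ Finset.Icc 1 ((d - 3) / 2),
    (etC d ^ k • Matrix.vecMulVec (uvec d r k) (star (uvec d r (d - 1 - k))) +
      (etC d)⁻¹ ^ k • Matrix.vecMulVec (uvec d r (d - 1 - k)) (star (uvec d r k)))

/-- `A₄ = |u₀⟩⟨u₀| + |u_{(d-1)/2}⟩⟨u_{(d-1)/2}|
    + ∑_{k=1}^{(d-3)/2} (|u_{d-1-k}⟩⟨u_k| + |u_k⟩⟨u_{d-1-k}|)`. -/
noncomputable def A4 (d r : ℕ) [Fact (1 < d)] : Matrix (NzRes d) (NzRes d) ℂ :=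
  Matrix.vecMulVec (uvec d r 0) (star (uvec d r 0)) +
  Matrix.vecMulVec (uvec d r ((d - 1) / 2)) (star (uvec d r ((d - 1) / 2))) +
  ∑ k ∈ Finset.Icc 1 ((d - 3) / 2),
    (Matrix.vecMulVec (uvec d r (d - 1 - k)) (star (uvec d r k)) +
      Matrix.vecMulVec (uvec d r k) (star (uvec d r (d - 1 - k))))

/-- The diagonal matrix `O x_k = ω^k x_k`. -/
noncomputable def Omat (d : ℕ) : Matrix (NzRes d) (NzRes d) ℂ :=
  Matrix.diagonal fun k : NzRes d => omC d ^ (k.1).val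

/-- The permutation matrix `U x_k = x_{k·r⁻¹ mod d}`. -/
noncomputable def Umat (d r : ℕ) : Matrix (NzRes d) (NzRes d) ℂ :=
  Matrix.of fun i k : NzRes d =>
    if (i : ZMod d) = (k : ZMod d) * (r : ZMod d)⁻¹ then (1 : ℂ) else 0

section helpers

lemma eq_inv_iff_aux {F : Type*} [Field F] {a b : F} (hb : b ≠ 0) : a = b⁻¹ ↔ a * b = 1 :=
  ⟨fun h => by rw [h, inv_mul_cancel₀ hb], fun h => eq_inv_of_mul_eq_one_left h⟩

lemma fold_even (f : ℕ → ℂ) (p : ℕ) :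
    ∑ k ∈ Finset.range (2 * p + 2), f k =
      f 0 + f (p + 1) + ∑ k ∈ Finset.Icc 1 p, (f k + f (2 * p + 2 - k)) := by
  have h1 : ∑ k ∈ Finset.Icc 1 p, (f k + f (2 * p + 2 - k)) =
      ∑ k ∈ Finset.range p, (f (1 + k) + f (2 * p + 2 - (1 + k))) := by
    have : Finset.Icc 1 p = Finset.Ico 1 (p + 1) := by ext; simp
    rw [this, Finset.sum_Ico_eq_sum_range]; rfl
  have h2 : 2 * p + 2 = (p + 2) + p := by ring
  rw [h1, h2, Finset.sum_range_add, Finset.sum_range_succ, Finset.sum_range_succ',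
    Finset.sum_add_distrib, ← Finset.sum_range_reflect (fun x => f (p + 2 + x))]
  have h3 : ∑ j ∈ Finset.range p, f (p + 2 + (p - 1 - j)) =
      ∑ j ∈ Finset.range p, f (p + 2 + p - (1 + j)) := by
    refine Finset.sum_congr rfl fun j hj => ?_
    rw [Finset.mem_range] at hj
    congr 1; omega
  have h4 : ∑ j ∈ Finset.range p, f (j + 1) = ∑ j ∈ Finset.range p, f (1 + j) :=
    Finset.sum_congr rfl fun j _ => by rw [add_comm]
  rw [h3, h4]; ring

lemma fold_odd (f : ℕ → ℂ) (m : ℕ) :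
    ∑ k ∈ Finset.Icc 1 (2 * m), f k =
      ∑ k ∈ Finset.Icc 1 m, (f k + f (2 * m + 1 - k)) := by
  have e : ∀ (q : ℕ) (g : ℕ → ℂ), ∑ k ∈ Finset.Icc 1 q, g k = ∑ k ∈ Finset.range q, g (1 + k) := by
    intro q g
    have : Finset.Icc 1 q = Finset.Ico 1 (q + 1) := by ext; simp
    rw [this, Finset.sum_Ico_eq_sum_range]; rfl
  rw [e, e, two_mul, Finset.sum_range_add, Finset.sum_add_distrib,
    ← Finset.sum_range_reflect (fun x => f (1 + (m + x)))]
  congr 1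
  refine Finset.sum_congr rfl fun j hj => ?_
  rw [Finset.mem_range] at hj
  congr 1; omega

lemma geom_root {z : ℂ} {n : ℕ} (hz : IsPrimitiveRoot z n) (t : ℕ) :
    ∑ k ∈ Finset.range n, z ^ (t * k) = if n ∣ t then (n : ℂ) else 0 := by
  simp_rw [pow_mul]
  split_ifs with h
  · rw [(hz.pow_eq_one_iff_dvd t).2 h]; simp
  · have h1 : z ^ t ≠ 1 := fun h' => h ((hz.pow_eq_one_iff_dvd t).1 h')
    have h2 := geom_sum_mul (z ^ t) n
    rw [← pow_mul, mul_comm t n, pow_mul, hz.pow_eq_one, one_pow, sub_self] at h2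
    exact (mul_eq_zero.1 h2).resolve_right (sub_ne_zero.2 h1)

lemma omC_prim (d : ℕ) (hd : d ≠ 0) : IsPrimitiveRoot (omC d) d :=
  Complex.isPrimitiveRoot_exp d hd

lemma etC_prim (d : ℕ) (hd : 1 < d) : IsPrimitiveRoot (etC d) (d - 1) := by
  have := Complex.isPrimitiveRoot_exp (d - 1) (by omega)
  rw [Nat.cast_sub hd.le, Nat.cast_one] at this
  exact this

lemma conj_root {z : ℂ} {n : ℕ} (hn : n ≠ 0) (hz : IsPrimitiveRoot z n) : star z = z⁻¹ := by
  have h : ‖z‖ = 1 := hz.norm'_eq_one hn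
  rw [Complex.inv_def, Complex.normSq_eq_norm_sq, h]; simp

lemma xv_val (d : ℕ) [Fact (1 < d)] (j : ℕ) (h : (j : ZMod d) ≠ 0) :
    ((xv d j : NzRes d) : ZMod d) = j := by
  simp [xv, h]

variable (d r : ℕ) [Fact d.Prime]

lemma cast_ne (j : ℕ) (h1 : 1 ≤ j) (h2 : j < d) : (j : ZMod d) ≠ 0 := by
  rw [Ne, ZMod.natCast_eq_zero_iff]
  exact Nat.not_dvd_of_pos_of_lt h1 h2

lemma sum_single_anti (c : ℕ → ℂ) (i k : NzRes d) :
    (∑ j ∈ Finset.Icc 1 (d - 1), c j * Matrix.single (xv d j) (xv d (d - j)) (1 : ℂ) i k)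
      = if (i : ZMod d) = - (k : ZMod d) then c (i : ZMod d).val else 0 := by
  have hp : 1 < d := (Fact.out : d.Prime).one_lt
  have : NeZero d := ⟨by omega⟩
  have hi0 : (i : ZMod d).val ≠ 0 := by
    rw [Ne, ZMod.val_eq_zero]; exact i.2
  have hi1 := ZMod.val_lt (i : ZMod d)
  have key : ∀ j, 1 ≤ j → j < d → (xv d j = i ↔ j = (i : ZMod d).val) := by
    intro j h1 h2
    rw [← Subtype.coe_inj, xv_val d j (cast_ne d j h1 h2)]
    constructor
    · intro h; rw [← h, ZMod.val_natCast, Nat.mod_eq_of_lt h2]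
    · intro h; rw [h, ZMod.natCast_zmod_val]
  rw [Finset.sum_eq_single (i : ZMod d).val]
  · have a1 := (key (i : ZMod d).val (by omega) hi1).2 rfl
    have a2 : xv d (d - (i : ZMod d).val) = k ↔ (i : ZMod d) = - (k : ZMod d) := by
      rw [← Subtype.coe_inj, xv_val d _ (cast_ne d _ (by omega) (by omega)),
        Nat.cast_sub hi1.le, ZMod.natCast_zmod_val, ZMod.natCast_self, zero_sub]
      constructor
      · intro h; rw [← h, neg_neg]
      · intro h; rw [h, neg_neg]
    rw [a1, Matrix.single_apply]
    simp [a2]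
  · intro j hj hne
    rw [Finset.mem_Icc] at hj
    have : ¬ xv d j = i := fun h => hne ((key j hj.1 (by omega)).1 h)
    simp [Matrix.single_apply, this]
  · intro h
    exact absurd (Finset.mem_Icc.2 ⟨by omega, by omega⟩) h

lemma A2_apply (i k : NzRes d) :
    A2 d i k = if (i : ZMod d) = - (k : ZMod d) then 1 else 0 := by
  rw [← sum_single_anti d (fun _ => 1) i k, A2, Matrix.sum_apply]
  simp

lemma A1_apply (hodd : Odd d) (i k : NzRes d) :
    A1 d i k = if (i : ZMod d) = - (k : ZMod d) then omC d ^ (i : ZMod d).val else 0 := by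
  have hp : 1 < d := (Fact.out : d.Prime).one_lt
  rw [← sum_single_anti d (fun j => omC d ^ j) i k, A1, Matrix.sum_apply]
  obtain ⟨m, hm⟩ := hodd
  have e1 : d - 1 = 2 * m := by omega
  have e2 : (d - 1) / 2 = m := by omega
  rw [e2, e1, fold_odd]
  refine Finset.sum_congr rfl fun j hj => ?_
  rw [Finset.mem_Icc] at hj
  have hw := omC_prim d (by omega)
  have e3 : 2 * m + 1 - j = d - j := by omega
  have e4 : d - (d - j) = j := by omega
  have e5 : omC d ^ (d - j) = (omC d)⁻¹ ^ j := by
    rw [inv_pow, eq_inv_iff_aux (pow_ne_zero _ (hw.ne_zero (by omega))), ← pow_add,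
      Nat.sub_add_cancel (by omega), hw.pow_eq_one]
  rw [e3, e4, e5]
  simp only [Matrix.add_apply, Matrix.smul_apply, smul_eq_mul]

lemma r_ne (hodd : Odd d) (hr : orderOf (r : ZMod d) = d - 1) : (r : ZMod d) ≠ 0 := by
  have hp : 1 < d := (Fact.out : d.Prime).one_lt
  intro h
  have h1 := pow_orderOf_eq_one (r : ZMod d)
  rw [hr, h, zero_pow (by omega)] at h1
  exact zero_ne_one h1

lemma xv_pow (hr0 : (r : ZMod d) ≠ 0) (a : ℕ) :
    ((xv d (r ^ a) : NzRes d) : ZMod d) = (r : ZMod d) ^ a := by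
  rw [xv_val, Nat.cast_pow]
  rw [Nat.cast_pow]; exact pow_ne_zero _ hr0

lemma exists_pow (hodd : Odd d) (hr : orderOf (r : ZMod d) = d - 1) (x : NzRes d) :
    ∃ a < d - 1, x = xv d (r ^ a) := by
  have hp : 1 < d := (Fact.out : d.Prime).one_lt
  have hr0 := r_ne d r hodd hr
  have hprim : IsPrimitiveRoot (r : ZMod d) (d - 1) := hr ▸ IsPrimitiveRoot.orderOf _
  have : NeZero (d - 1) := ⟨by omega⟩
  obtain ⟨a, ha, h⟩ := hprim.eq_pow_of_pow_eq_one (ZMod.pow_card_sub_one_eq_one x.2)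
  exact ⟨a, ha, Subtype.ext (by rw [xv_pow d r hr0, h])⟩

lemma uvec_apply (hodd : Odd d) (hr : orderOf (r : ZMod d) = d - 1) (k a : ℕ) (ha : a < d - 1) :
    uvec d r k (xv d (r ^ a)) = (Real.sqrt ((d : ℝ) - 1) : ℂ)⁻¹ * etC d ^ (a * k) := by
  have hr0 := r_ne d r hodd hr
  rw [uvec, Finset.sum_eq_single a]
  · simp
  · intro b hb hne
    rw [Finset.mem_range] at hb
    rw [Pi.single_apply, if_neg, mul_zero]
    intro h
    apply hne
    have h' := congrArg Subtype.val h
    rw [xv_pow d r hr0, xv_pow d r hr0] at h'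
    exact (pow_injOn_Iio_orderOf (by simpa [hr] using ha) (by simpa [hr] using hb) h').symm
  · intro h; exact absurd (Finset.mem_range.2 ha) h

/-- common term -/
lemma term_eq (hodd : Odd d) (hr : orderOf (r : ZMod d) = d - 1) (k a b l : ℕ)
    (ha : a < d - 1) (hb : b < d - 1) (hl : d - 1 ∣ k + l) :
    Matrix.vecMulVec (uvec d r k) (star (uvec d r l)) (xv d (r ^ a)) (xv d (r ^ b)) =
      ((d - 1 : ℕ) : ℂ)⁻¹ * etC d ^ ((a + b) * k) := by
  have hp : 1 < d := (Fact.out : d.Prime).one_lt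
  have hz := etC_prim d hp
  have hz0 := hz.ne_zero (by omega)
  rw [Matrix.vecMulVec_apply, Pi.star_apply, uvec_apply d r hodd hr k a ha,
    uvec_apply d r hodd hr l b hb, star_mul', star_pow, conj_root (by omega) hz, star_inv₀]
  have e1 : star ((Real.sqrt ((d : ℝ) - 1) : ℝ) : ℂ) = ((Real.sqrt ((d : ℝ) - 1) : ℝ) : ℂ) :=
    Complex.conj_ofReal _
  have e2 : ((Real.sqrt ((d : ℝ) - 1) : ℝ) : ℂ)⁻¹ * ((Real.sqrt ((d : ℝ) - 1) : ℝ) : ℂ)⁻¹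
      = ((d - 1 : ℕ) : ℂ)⁻¹ := by
    rw [← mul_inv, ← Complex.ofReal_mul, Real.mul_self_sqrt, Nat.cast_sub hp.le]
    · simp
    · have : (1 : ℝ) < d := by exact_mod_cast hp
      linarith
  have e3 : (etC d)⁻¹ ^ (b * l) = etC d ^ (b * k) := by
    rw [inv_pow, eq_comm, eq_inv_iff_aux (pow_ne_zero _ hz0), ← pow_add, ← mul_add,
      hz.pow_eq_one_iff_dvd]
    exact Dvd.dvd.mul_left hl b
  rw [e1, e3, ← e2, add_mul, pow_add]; ring

lemma final_sum (hodd : Odd d) (hr : orderOf (r : ZMod d) = d - 1) (c a b : ℕ) :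
    ∑ k ∈ Finset.range (d - 1), ((d - 1 : ℕ) : ℂ)⁻¹ * etC d ^ ((c + (a + b)) * k) =
      if (xv d (r ^ a) : ZMod d) * (xv d (r ^ b) : ZMod d) * (r : ZMod d) ^ c = 1 then 1 else 0 := by
  have hp : 1 < d := (Fact.out : d.Prime).one_lt
  have hr0 := r_ne d r hodd hr
  rw [← Finset.mul_sum, geom_root (etC_prim d hp), xv_pow d r hr0, xv_pow d r hr0, ← pow_add,
    ← pow_add, add_comm c]
  have hdvd : (r : ZMod d) ^ (a + b + c) = 1 ↔ d - 1 ∣ a + b + c := by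
    rw [← orderOf_dvd_iff_pow_eq_one, hr]
  simp only [hdvd]
  have : ((d - 1 : ℕ) : ℂ) ≠ 0 := by
    rw [Nat.cast_ne_zero]; omega
  split_ifs <;> simp [this]

lemma A4_apply (hodd : Odd d) (hr : orderOf (r : ZMod d) = d - 1) (i k : NzRes d) :
    A4 d r i k = if (i : ZMod d) * (k : ZMod d) = 1 then 1 else 0 := by
  have hp : 1 < d := (Fact.out : d.Prime).one_lt
  obtain ⟨a, ha, rfl⟩ := exists_pow d r hodd hr i
  obtain ⟨b, hb, rfl⟩ := exists_pow d r hodd hr k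
  have F := final_sum d r hodd hr 0 a b
  rw [pow_zero, mul_one] at F
  rw [← F]
  obtain ⟨m, hm⟩ := hodd
  obtain ⟨p, rfl⟩ : ∃ p, m = p + 1 := ⟨m - 1, by omega⟩
  have e0 : d - 1 = 2 * p + 2 := by omega
  have e1 : (d - 1) / 2 = p + 1 := by omega
  have e2 : (d - 3) / 2 = p := by omega
  have T := fun k l => term_eq d r ⟨_, hm⟩ hr k a b l ha hb
  rw [A4, e1, e2, Matrix.add_apply, Matrix.add_apply, Matrix.sum_apply, T _ _ (by simp),
    T _ _ (by rw [e0]; exact ⟨1, by ring⟩), e0, fold_even]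
  congr 1
  · simp
  refine Finset.sum_congr rfl fun k hk => ?_
  rw [Finset.mem_Icc] at hk
  rw [Matrix.add_apply, ← e0, T _ _ ⟨1, by omega⟩, T _ _ ⟨1, by omega⟩, zero_add]
  ring

lemma A3_apply (hodd : Odd d) (hr : orderOf (r : ZMod d) = d - 1) (i k : NzRes d) :
    A3 d r i k = if (i : ZMod d) * (k : ZMod d) * (r : ZMod d) = 1 then 1 else 0 := by
  have hp : 1 < d := (Fact.out : d.Prime).one_lt
  have hz := etC_prim d hp
  obtain ⟨a, ha, rfl⟩ := exists_pow d r hodd hr i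
  obtain ⟨b, hb, rfl⟩ := exists_pow d r hodd hr k
  have F := final_sum d r hodd hr 1 a b
  rw [pow_one] at F
  rw [← F]
  obtain ⟨m, hm⟩ := hodd
  obtain ⟨p, rfl⟩ : ∃ p, m = p + 1 := ⟨m - 1, by omega⟩
  have e0 : d - 1 = 2 * p + 2 := by omega
  have e1 : (d - 1) / 2 = p + 1 := by omega
  have e2 : (d - 3) / 2 = p := by omega
  have T := fun k l => term_eq d r ⟨_, hm⟩ hr k a b l ha hb
  rw [A3, e1, e2, Matrix.add_apply, Matrix.add_apply, Matrix.sum_apply, T _ _ (by simp),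
    Matrix.smul_apply, T _ _ (by rw [e0]; exact ⟨1, by ring⟩), e0, fold_even]
  congr 1
  · simp only [mul_zero, smul_eq_mul]
    ring
  refine Finset.sum_congr rfl fun k hk => ?_
  rw [Finset.mem_Icc] at hk
  have e5 : (etC d)⁻¹ ^ k = etC d ^ (d - 1 - k) := by
    rw [inv_pow, eq_comm, eq_inv_iff_aux (pow_ne_zero _ (hz.ne_zero (by omega))), ← pow_add,
      Nat.sub_add_cancel (by omega), hz.pow_eq_one]
  rw [Matrix.add_apply, Matrix.smul_apply, Matrix.smul_apply, e5, ← e0, T _ _ ⟨1, by omega⟩,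
    T _ _ ⟨1, by omega⟩]
  simp only [smul_eq_mul, add_mul, one_mul, pow_add]
  ring

/-- weighted permutation matrix -/
noncomputable def PM (s : NzRes d → NzRes d) : Matrix (NzRes d) (NzRes d) ℂ :=
  Matrix.of fun i k => if i = s k then 1 else 0

lemma PM_mul (s t : NzRes d → NzRes d) : PM d s * PM d t = PM d (s ∘ t) := by
  ext i k
  simp [Matrix.mul_apply, PM]

lemma PM_id : PM d id = 1 := by
  ext i k
  simp [PM, Matrix.one_apply]

lemma PM_herm (s : NzRes d → NzRes d) (h : ∀ x, s (s x) = x) : (PM d s).IsHermitian := by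
  ext i k
  have : k = s i ↔ i = s k := ⟨fun e => by rw [e, h], fun e => by rw [e, h]⟩
  simp only [PM, Matrix.conjTranspose_apply, Matrix.of_apply, this]
  split_ifs <;> simp

lemma PM_mulVec (s : NzRes d → NzRes d) (k : NzRes d) :
    (PM d s).mulVec (Pi.single k 1) = Pi.single (s k) 1 := by
  ext i
  simp [PM, Pi.single_apply]

def sneg (x : NzRes d) : NzRes d := ⟨-x.1, neg_ne_zero.2 x.2⟩
def sinv (x : NzRes d) : NzRes d := ⟨x.1⁻¹, inv_ne_zero x.2⟩
def smulr (c : ZMod d) (hc : c ≠ 0) (x : NzRes d) : NzRes d := ⟨x.1 * c, mul_ne_zero x.2 hc⟩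

end helpers

theorem stmt_10 (d r : ℕ) [Fact d.Prime] (hodd : Odd d)
    (hr : orderOf (r : ZMod d) = d - 1) :
    ((A1 d).IsHermitian ∧ A1 d * A1 d = 1) ∧
    ((A2 d).IsHermitian ∧ A2 d * A2 d = 1) ∧
    ((A3 d r).IsHermitian ∧ A3 d r * A3 d r = 1) ∧
    ((A4 d r).IsHermitian ∧ A4 d r * A4 d r = 1) ∧
    A1 d * A2 d = Omat d ∧
    A3 d r * A4 d r = Umat d r ∧
    (∀ j : ℕ, j ≤ d - 1 →
      (A4 d r).mulVec (Pi.single (xv d (r ^ j)) 1) =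
        Pi.single (xv d (r ^ (d - 1 - j))) 1) ∧
    (∀ k : NzRes d, (A4 d r).mulVec (Pi.single k 1) =
        Pi.single (⟨(k : ZMod d)⁻¹, inv_ne_zero k.2⟩ : NzRes d) 1) ∧
    (A3 d r * A4 d r) * A2 d * (A4 d r * A3 d r) = A2 d := by
  have hp : 1 < d := (Fact.out : d.Prime).one_lt
  have hr0 := r_ne d r hodd hr
  have hri : (r : ZMod d)⁻¹ ≠ 0 := inv_ne_zero hr0
  have hw := omC_prim d (by omega)
  have hw0 := hw.ne_zero (by omega)
  have h2 : A2 d = PM d (sneg d) := by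
    ext i k
    rw [A2_apply]
    simp [PM, sneg, Subtype.ext_iff]
  have h4 : A4 d r = PM d (sinv d) := by
    ext i k
    rw [A4_apply d r hodd hr]
    simp [PM, sinv, Subtype.ext_iff, eq_inv_iff_aux k.2]
  have h3 : A3 d r = PM d (smulr d _ hri ∘ sinv d) := by
    ext i k
    rw [A3_apply d r hodd hr]
    have hik : (i : ZMod d) = (k : ZMod d)⁻¹ * (r : ZMod d)⁻¹ ↔
        (i : ZMod d) * (k : ZMod d) * (r : ZMod d) = 1 := by
      rw [← mul_inv, eq_inv_iff_aux (mul_ne_zero k.2 hr0), mul_assoc]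
    simp only [PM, sinv, smulr, Subtype.ext_iff, Matrix.of_apply, Function.comp, hik]
  have hU : Umat d r = PM d (smulr d _ hri) := by
    ext i k
    simp [PM, Umat, smulr, Subtype.ext_iff]
  have h1 : A1 d = Omat d * PM d (sneg d) := by
    ext i k
    rw [A1_apply d hodd, Omat, Matrix.diagonal_mul]
    simp [PM, sneg, Subtype.ext_iff]
  have i2 : ∀ x, sneg d (sneg d x) = x := fun x => Subtype.ext (by simp [sneg])
  have i4 : ∀ x, sinv d (sinv d x) = x := fun x => Subtype.ext (by simp [sinv])
  have i3 : ∀ x, (smulr d _ hri ∘ sinv d) ((smulr d _ hri ∘ sinv d) x) = x :=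
    fun x => Subtype.ext (by simp only [Function.comp, sinv, smulr]; field_simp)
  have sq : ∀ s, (∀ x, s (s x) = x) → PM d s * PM d s = 1 := by
    intro s h
    rw [PM_mul, ← PM_id]
    congr 1; funext x; exact h x
  have c34 : A3 d r * A4 d r = PM d (smulr d _ hri) := by
    rw [h3, h4, PM_mul]
    congr 1; funext x; simp [i4]
  have c12 : A1 d * A2 d = Omat d := by
    rw [h1, h2, Matrix.mul_assoc, sq _ i2, Matrix.mul_one]
  have hval : ∀ x : NzRes d, omC d ^ (x.1).val * omC d ^ ((-x.1 : ZMod d)).val = 1 := by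
    intro x
    have : NeZero x.1 := ⟨x.2⟩
    have hlt := ZMod.val_lt x.1
    rw [← pow_add, ZMod.val_neg_of_ne_zero, Nat.add_sub_cancel' hlt.le, hw.pow_eq_one]
  have herm1 : (A1 d).IsHermitian := by
    ext i k
    rw [Matrix.conjTranspose_apply, A1_apply d hodd, A1_apply d hodd]
    by_cases h : (i : ZMod d) = -(k : ZMod d)
    · have h' : (k : ZMod d) = -(i : ZMod d) := by rw [h, neg_neg]
      rw [if_pos h, if_pos h', star_pow, conj_root (by omega) hw, inv_pow, h]
      rw [eq_comm, eq_inv_iff_aux (pow_ne_zero _ hw0), mul_comm]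
      exact hval k
    · have h' : ¬ (k : ZMod d) = -(i : ZMod d) := fun e => h (by rw [e, neg_neg])
      rw [if_neg h, if_neg h', star_zero]
  have sq1 : A1 d * A1 d = 1 := by
    have hOm : A1 d * Omat d = PM d (sneg d) := by
      ext i k
      rw [Omat, Matrix.mul_diagonal, A1_apply d hodd]
      by_cases h : (i : ZMod d) = -(k : ZMod d)
      · have h' : (k : ZMod d) = -(i : ZMod d) := by rw [h, neg_neg]
        rw [if_pos h, h', hval i]
        simp [PM, sneg, Subtype.ext_iff, h]
      · rw [if_neg h, zero_mul]
        simp [PM, sneg, Subtype.ext_iff, h]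
    calc A1 d * A1 d = A1 d * (Omat d * PM d (sneg d)) := by rw [← h1]
      _ = A1 d * Omat d * PM d (sneg d) := (Matrix.mul_assoc _ _ _).symm
      _ = 1 := by rw [hOm, sq _ i2]
  refine ⟨⟨herm1, sq1⟩, ?_, ?_, ?_, c12, ?_, ?_, ?_, ?_⟩
  · rw [h2]; exact ⟨PM_herm d _ i2, sq _ i2⟩
  · rw [h3]; exact ⟨PM_herm d _ i3, sq _ i3⟩
  · rw [h4]; exact ⟨PM_herm d _ i4, sq _ i4⟩
  · rw [c34, hU]
  · intro j hj
    rw [h4, PM_mulVec]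
    congr 1
    apply Subtype.ext
    change ((xv d (r ^ j) : NzRes d) : ZMod d)⁻¹ = _
    rw [xv_pow d r hr0, xv_pow d r hr0, eq_comm,
      eq_inv_iff_aux (pow_ne_zero _ hr0), ← pow_add, Nat.sub_add_cancel hj, ← hr,
      pow_orderOf_eq_one]
  · intro k
    rw [h4, PM_mulVec]; rfl
  · rw [c34, h2, h3, h4, PM_mul, PM_mul, PM_mul]
    congr 1; funext x
    apply Subtype.ext
    simp only [Function.comp, sinv, smulr, sneg]
    field_simp
end

section
/- Let μ ∈ (0, π/2), c = cos(μ), s = sin(μ), α = c/s, and ε ≥ 0. Let H_A, H_B be finite-dimensional complex Hilbert spaces, M₁, M₂ self-adjoint operators on H_A with M₁² = M₂² = 1, N₁, N₂ self-adjoint operators on H_B with N₁² = N₂² = 1, and ψ ∈ H_A ⊗ H_B a unit vector with ⟨ψ, (α M₁⊗N₁ + α M₁⊗N₂ + M₂⊗N₁ − M₂⊗N₂)ψ⟩ ≥ 2√(1+α²) − ε. Set Z_A = M₁⊗1, X_A = M₂⊗1, Z_B = (1⊗(N₁+N₂))/(2c), X_B = (1⊗(N₁−N₂))/(2s). Then: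 ‖(Z_A − Z_B)ψ‖ ≤ (√s/c)√ε; ‖(X_A − X_B)ψ‖ ≤ √ε/√s; ‖(Z_A X_B + X_A Z_B)ψ‖ ≤ √ε/(c√s); ‖(X_A(1 + Z_B) − X_B(1 − Z_A))ψ‖ ≤ ((c+1)/(c√s))√ε; ‖(Z_A(1 + X_B) − Z_B(1 − X_A))ψ‖ ≤ ((s+1)/(c√s))√ε; ‖(Z_A X_A + X_A Z_A)ψ‖ ≤ ((1+c+s)/(c√s))√ε; and ‖(X_A Z_A + X_B Z_B)ψ‖ ≤ ((2s²+cs+c+s)/(cs√s))√ε. -/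
open Matrix Kronecker

/-- The action of a matrix on a vector of the corresponding Euclidean (Hilbert) space. -/
noncomputable def mApply {ι κ : Type*} [Fintype ι] (A : Matrix κ ι ℂ) (v : EuclideanSpace ℂ ι) :
    EuclideanSpace ℂ κ :=
  (WithLp.equiv 2 (κ → ℂ)).symm (A.mulVec (WithLp.equiv 2 (ι → ℂ) v))

section helpers
variable {n : Type*} [Fintype n] [DecidableEq n]

theorem mA_add (A B : Matrix n n ℂ) (v : EuclideanSpace ℂ n) :
    mApply (A + B) v = mApply A v + mApply B v := by
  ext i; simp [mApply, Matrix.add_mulVec]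

theorem mA_sub (A B : Matrix n n ℂ) (v : EuclideanSpace ℂ n) :
    mApply (A - B) v = mApply A v - mApply B v := by
  ext i; simp [mApply, Matrix.sub_mulVec]

theorem mA_smul (r : ℝ) (A : Matrix n n ℂ) (v : EuclideanSpace ℂ n) :
    mApply (r • A) v = r • mApply A v := by
  ext i; simp [mApply, Matrix.smul_mulVec]

theorem mA_mul (A B : Matrix n n ℂ) (v : EuclideanSpace ℂ n) :
    mApply (A * B) v = mApply A (mApply B v) := by
  ext i; simp [mApply, Matrix.mulVec_mulVec]

theorem mA_one (v : EuclideanSpace ℂ n) : mApply (1 : Matrix n n ℂ) v = v := by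
  ext i; simp [mApply]

theorem mA_inner (A : Matrix n n ℂ) (v w : EuclideanSpace ℂ n) :
    inner ℂ (mApply A v) w = inner ℂ v (mApply Aᴴ w) := by
  simp only [mApply, EuclideanSpace.inner_eq_star_dotProduct]
  change _ ⬝ᵥ star (A *ᵥ _) = (Aᴴ *ᵥ _) ⬝ᵥ _
  rw [Matrix.star_mulVec, dotProduct_comm (Aᴴ *ᵥ _), Matrix.dotProduct_mulVec, dotProduct_comm]
  rfl

/-- quadratic form -/
noncomputable def qf (A : Matrix n n ℂ) (v : EuclideanSpace ℂ n) : ℝ :=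
  (inner ℂ v (mApply A v) : ℂ).re

theorem qf_add (A B : Matrix n n ℂ) (v : EuclideanSpace ℂ n) :
    qf (A + B) v = qf A v + qf B v := by
  simp [qf, mA_add, inner_add_right]

theorem qf_sub (A B : Matrix n n ℂ) (v : EuclideanSpace ℂ n) :
    qf (A - B) v = qf A v - qf B v := by
  simp [qf, mA_sub, inner_sub_right]

theorem qf_smul (r : ℝ) (A : Matrix n n ℂ) (v : EuclideanSpace ℂ n) :
    qf (r • A) v = r * qf A v := by
  simp [qf, mA_smul, inner_smul_right_eq_smul]

theorem qf_one (v : EuclideanSpace ℂ n) : qf (1 : Matrix n n ℂ) v = ‖v‖ ^ 2 := by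
  rw [qf, mA_one]
  exact (norm_sq_eq_re_inner (𝕜 := ℂ) v).symm

theorem qf_sq (A : Matrix n n ℂ) (hA : A.IsHermitian) (v : EuclideanSpace ℂ n) :
    qf (A * A) v = ‖mApply A v‖ ^ 2 := by
  rw [norm_sq_eq_re_inner (𝕜 := ℂ) (mApply A v), mA_inner, hA.eq, ← mA_mul]; rfl

theorem norm_unit (A : Matrix n n ℂ) (hA : A.IsHermitian) (h : A * A = 1)
    (v : EuclideanSpace ℂ n) : ‖mApply A v‖ = ‖v‖ := by
  have := qf_sq A hA v
  rw [h, qf_one] at this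
  exact ((sq_eq_sq₀ (norm_nonneg _) (norm_nonneg _)).1 this).symm

theorem le_of_sq_le_sq_aux {a b : ℝ} (h : a ^ 2 ≤ b ^ 2) (hb : 0 ≤ b) : a ≤ b :=
  abs_le_of_sq_le_sq' h hb |>.2

theorem sos1 (c s : ℝ) (hs : s ≠ 0) (hcs : c ^ 2 + s ^ 2 = 1)
    (ZA XA ZB XB : Matrix n n ℂ) (a1 : ZA * ZA = 1) (a2 : XA * XA = 1)
    (k1 : ZB * ZA = ZA * ZB) (k4 : XB * XA = XA * XB)
    (b1 : c ^ 2 • (ZB * ZB) + s ^ 2 • (XB * XB) = 1) :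
    (c ^ 2 / s) • ((ZA - ZB) * (ZA - ZB)) + s • ((XA - XB) * (XA - XB)) =
      (2 / s) • (1 : Matrix n n ℂ) - ((2 * c ^ 2 / s) • (ZA * ZB) + (2 * s) • (XA * XB)) := by
  simp only [mul_sub, sub_mul, a1, a2, k1, k4]
  have e : c ^ 2 = 1 - s ^ 2 := by linarith
  have e2 : c ^ 2 / s + s = 1 / s := by field_simp; linarith
  have e3 : (c ^ 2 / s) • (1 : Matrix n n ℂ) + s • (1 : Matrix n n ℂ) = (1 / s) • 1 := by
    rw [← add_smul, e2]
  have b2 : (c ^ 2 / s) • (ZB * ZB) + s • (XB * XB) = (1 / s) • (1 : Matrix n n ℂ) := by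
    rw [← b1, smul_add, smul_smul, smul_smul]
    congr 2 <;> field_simp
  linear_combination (norm := module) e3 + b2

theorem sos2 (c s : ℝ) (hcs : c ^ 2 + s ^ 2 = 1)
    (ZA XA ZB XB : Matrix n n ℂ) (a1 : ZA * ZA = 1) (a2 : XA * XA = 1)
    (k1 : ZB * ZA = ZA * ZB) (k2 : ZB * XA = XA * ZB)
    (k3 : XB * ZA = ZA * XB) (k4 : XB * XA = XA * XB)
    (b1 : c ^ 2 • (ZB * ZB) + s ^ 2 • (XB * XB) = 1) (b2 : XB * ZB = - (ZB * XB))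
    (K : Matrix n n ℂ) (hK : K = c ^ 2 • (ZA * ZB) + s ^ 2 • (XA * XB)) :
    (1 - K) * (1 - K) + (c ^ 2 * s ^ 2) • ((ZA * XB + XA * ZB) * (ZA * XB + XA * ZB)) =
      (2 : ℝ) • (1 - K) := by
  have sw : ∀ A B C D : Matrix n n ℂ, B * C = C * B → (A * B) * (C * D) = (A * C) * (B * D) := by
    intro A B C D h
    rw [mul_assoc, ← mul_assoc B, h, mul_assoc, ← mul_assoc]
  have hKK : K * K = c ^ 4 • (ZB * ZB) + s ^ 4 • (XB * XB)
      + (c ^ 2 * s ^ 2) • (ZA * XA * (ZB * XB)) - (c ^ 2 * s ^ 2) • (XA * ZA * (ZB * XB)) := by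
    subst hK
    simp only [mul_add, add_mul, smul_mul_assoc, mul_smul_comm]
    rw [sw ZA ZB ZA ZB k1, sw ZA ZB XA XB k2, sw XA XB ZA ZB k3, sw XA XB XA XB k4, a1, a2, b2]
    simp only [one_mul, mul_neg]
    module
  have hTT : (ZA * XB + XA * ZB) * (ZA * XB + XA * ZB) = XB * XB + ZB * ZB
      - ZA * XA * (ZB * XB) + XA * ZA * (ZB * XB) := by
    simp only [mul_add, add_mul]
    rw [sw ZA XB ZA XB k3, sw ZA XB XA ZB k4, sw XA ZB ZA XB k1, sw XA ZB XA ZB k2, a1, a2, b2]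
    simp only [one_mul, mul_neg]
    module
  have e : c ^ 2 = 1 - s ^ 2 := by linarith
  have e4 : c ^ 4 = c ^ 2 - c ^ 2 * s ^ 2 := by
    linear_combination c ^ 2 * hcs
  have e5 : s ^ 4 = s ^ 2 - c ^ 2 * s ^ 2 := by
    linear_combination s ^ 2 * hcs
  have : (1 - K) * (1 - K) = 1 - (2 : ℝ) • K + K * K := by
    rw [mul_sub, sub_mul, sub_mul]; simp only [one_mul, mul_one]; module
  rw [this, hKK, hTT, e4, e5]
  have b3 : (1 : Matrix n n ℂ) + 1 = (2 : ℝ) • 1 := by module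
  linear_combination (norm := module) b1

theorem core (c s ε : ℝ) (hc : 0 < c) (hs : 0 < s) (hcs : c ^ 2 + s ^ 2 = 1) (hε : 0 ≤ ε)
    (ZA XA ZB XB : Matrix n n ℂ) (a1 : ZA * ZA = 1) (a2 : XA * XA = 1)
    (h1 : ZA.IsHermitian) (h2 : XA.IsHermitian) (h3 : ZB.IsHermitian) (h4 : XB.IsHermitian)
    (k1 : ZB * ZA = ZA * ZB) (k2 : ZB * XA = XA * ZB)
    (k3 : XB * ZA = ZA * XB) (k4 : XB * XA = XA * XB)
    (b1 : c ^ 2 • (ZB * ZB) + s ^ 2 • (XB * XB) = 1) (b2 : XB * ZB = - (ZB * XB))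
    (ψ : EuclideanSpace ℂ n) (hψ : ‖ψ‖ = 1)
    (hv : 2 / s - ε ≤ qf ((2 * c ^ 2 / s) • (ZA * ZB) + (2 * s) • (XA * XB)) ψ) :
    ‖mApply (ZA - ZB) ψ‖ ≤ Real.sqrt s / c * Real.sqrt ε ∧
    ‖mApply (XA - XB) ψ‖ ≤ Real.sqrt ε / Real.sqrt s ∧
    ‖mApply (ZA * XB + XA * ZB) ψ‖ ≤ Real.sqrt ε / (c * Real.sqrt s) ∧
    ‖mApply (XA * (1 + ZB) - XB * (1 - ZA)) ψ‖ ≤ (c + 1) / (c * Real.sqrt s) * Real.sqrt ε ∧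
    ‖mApply (ZA * (1 + XB) - ZB * (1 - XA)) ψ‖ ≤ (s + 1) / (c * Real.sqrt s) * Real.sqrt ε ∧
    ‖mApply (ZA * XA + XA * ZA) ψ‖ ≤ (1 + c + s) / (c * Real.sqrt s) * Real.sqrt ε ∧
    ‖mApply (XA * ZA + XB * ZB) ψ‖ ≤
      (2 * s ^ 2 + c * s + c + s) / (c * s * Real.sqrt s) * Real.sqrt ε := by
  have S1 := congrArg (fun A => qf A ψ) (sos1 c s hs.ne' hcs ZA XA ZB XB a1 a2 k1 k4 b1)
  beta_reduce at S1
  rw [qf_sub, qf_add, qf_smul, qf_smul, qf_smul, qf_sq _ (h1.sub h3), qf_sq _ (h2.sub h4),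
    qf_one, hψ, qf_add, qf_smul, qf_smul] at S1
  have hT : (ZA * XB + XA * ZB).IsHermitian := by
    unfold Matrix.IsHermitian
    rw [conjTranspose_add, conjTranspose_mul, conjTranspose_mul, h1.eq, h2.eq, h3.eq, h4.eq, k2, k3]
  have hK : (1 - (c ^ 2 • (ZA * ZB) + s ^ 2 • (XA * XB))).IsHermitian := by
    unfold Matrix.IsHermitian
    simp only [conjTranspose_sub, conjTranspose_one, conjTranspose_add, conjTranspose_smul,
      conjTranspose_mul, h1.eq, h2.eq, h3.eq, h4.eq, k1, k4, star_trivial]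
  have S2 := congrArg (fun A => qf A ψ)
    (sos2 c s hcs ZA XA ZB XB a1 a2 k1 k2 k3 k4 b1 b2 _ rfl)
  beta_reduce at S2
  rw [qf_add, qf_smul, qf_smul, qf_sq _ hK, qf_sq _ hT, qf_sub, qf_one, hψ, qf_add, qf_smul,
    qf_smul] at S2
  rw [qf_add, qf_smul, qf_smul] at hv
  obtain ⟨r, hr, rfl⟩ : ∃ r : ℝ, 0 < r ∧ s = r ^ 2 :=
    ⟨Real.sqrt s, Real.sqrt_pos.2 hs, (Real.sq_sqrt hs.le).symm⟩
  obtain ⟨e, he, rfl⟩ : ∃ e : ℝ, 0 ≤ e ∧ ε = e ^ 2 :=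
    ⟨Real.sqrt ε, Real.sqrt_nonneg _, (Real.sq_sqrt hε).symm⟩
  rw [Real.sqrt_sq hr.le, Real.sqrt_sq he]
  have p0 := norm_nonneg (mApply (ZA - ZB) ψ)
  have p1 := norm_nonneg (mApply (XA - XB) ψ)
  have p2 := norm_nonneg (mApply (ZA * XB + XA * ZB) ψ)
  have q1 : ‖mApply (ZA - ZB) ψ‖ ≤ r / c * e := by
    refine le_of_sq_le_sq_aux ?_ (by positivity)
    have : c ^ 2 / r ^ 2 * ‖mApply (ZA - ZB) ψ‖ ^ 2 ≤ e ^ 2 := by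
      have : 0 ≤ r ^ 2 * ‖mApply (XA - XB) ψ‖ ^ 2 := by positivity
      linarith
    rw [div_mul_eq_mul_div, div_le_iff₀ (by positivity)] at this
    rw [mul_pow, div_pow, div_mul_eq_mul_div, le_div_iff₀ (by positivity)]
    linarith
  have q2 : ‖mApply (XA - XB) ψ‖ ≤ e / r := by
    refine le_of_sq_le_sq_aux ?_ (by positivity)
    have : r ^ 2 * ‖mApply (XA - XB) ψ‖ ^ 2 ≤ e ^ 2 := by
      have : 0 ≤ c ^ 2 / r ^ 2 * ‖mApply (ZA - ZB) ψ‖ ^ 2 := by positivity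
      linarith
    rw [div_pow, le_div_iff₀ (by positivity)]
    linarith
  have q3 : ‖mApply (ZA * XB + XA * ZB) ψ‖ ≤ e / (c * r) := by
    refine le_of_sq_le_sq_aux ?_ (by positivity)
    have hv' := mul_le_mul_of_nonneg_left hv hs.le
    have e1 : r ^ 2 * (2 / r ^ 2 - e ^ 2) = 2 - r ^ 2 * e ^ 2 := by field_simp
    have e2 : ∀ x y : ℝ, r ^ 2 * (2 * c ^ 2 / r ^ 2 * x + 2 * r ^ 2 * y) =
      2 * (c ^ 2 * x + (r ^ 2) ^ 2 * y) := by intro x y; field_simp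
    rw [e1, e2] at hv'
    have : r ^ 2 * (c ^ 2 * r ^ 2 * ‖mApply (ZA * XB + XA * ZB) ψ‖ ^ 2) ≤ r ^ 2 * e ^ 2 := by
      have := sq_nonneg ‖mApply (1 - (c ^ 2 • (ZA * ZB) + (r ^ 2) ^ 2 • (XA * XB))) ψ‖
      linarith
    have := le_of_mul_le_mul_left this hs
    rw [div_pow, le_div_iff₀ (by positivity)]
    linarith
  have hZBn : ∀ v, ‖mApply ZB v‖ ≤ 1 / c * ‖v‖ := by
    intro v
    have S3 := congrArg (fun A => qf A v) b1
    beta_reduce at S3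
    rw [qf_add, qf_smul, qf_smul, qf_sq _ h3, qf_sq _ h4, qf_one] at S3
    refine le_of_sq_le_sq_aux ?_ (by positivity)
    have : 0 ≤ (r ^ 2) ^ 2 * ‖mApply XB v‖ ^ 2 := by positivity
    rw [mul_pow, div_pow, one_pow, div_mul_eq_mul_div, le_div_iff₀ (by positivity)]
    linarith
  refine ⟨q1, q2, q3, ?_, ?_, ?_, ?_⟩
  · have : XA * (1 + ZB) - XB * (1 - ZA) = (XA - XB) + (ZA * XB + XA * ZB) := by
      rw [mul_add, mul_sub, k3, mul_one, mul_one]; abel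
    rw [this, mA_add]
    refine (norm_add_le _ _).trans ((add_le_add q2 q3).trans (le_of_eq ?_))
    field_simp
  · have : ZA * (1 + XB) - ZB * (1 - XA) = (ZA - ZB) + (ZA * XB + XA * ZB) := by
      rw [mul_add, mul_sub, k2, mul_one, mul_one]; abel
    rw [this, mA_add]
    refine (norm_add_le _ _).trans ((add_le_add q1 q3).trans (le_of_eq ?_))
    field_simp
  · have : ZA * XA + XA * ZA = ZA * (XA - XB) + XA * (ZA - ZB) + (ZA * XB + XA * ZB) := by
      rw [mul_sub, mul_sub]; abel
    rw [this, mA_add, mA_add, mA_mul ZA, mA_mul XA (ZA - ZB)]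
    refine (norm_add₃_le).trans ?_
    rw [norm_unit ZA h1 a1, norm_unit XA h2 a2]
    refine (add_le_add (add_le_add q2 q1) q3).trans (le_of_eq ?_)
    field_simp
    ring
  · have : XA * ZA + XB * ZB = ZB * (XA - XB) + XA * (ZA - ZB) := by
      rw [mul_sub, mul_sub, b2, k2]; abel
    rw [this, mA_add, mA_mul ZB, mA_mul XA]
    refine (norm_add_le _ _).trans ?_
    rw [norm_unit XA h2 a2]
    refine (add_le_add ((hZBn _).trans (mul_le_mul_of_nonneg_left q2 (by positivity))) q1).trans ?_
    have : (2 * (r ^ 2) ^ 2 + c * r ^ 2 + c + r ^ 2) / (c * r ^ 2 * r) * e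
      = 1 / c * (e / r) + r / c * e + ((r ^ 2) ^ 2 + c * r ^ 2 + c) / (c * r ^ 2 * r) * e := by
      field_simp
      ring
    rw [this]
    have : 0 ≤ ((r ^ 2) ^ 2 + c * r ^ 2 + c) / (c * r ^ 2 * r) * e := by positivity
    linarith

end helpers

/-- Consequences of near-maximal violation of the weighted CHSH
inequality.  `H_A = ℂ^{nA}`, `H_B = ℂ^{nB}`, `H_A ⊗ H_B` is
`EuclideanSpace ℂ (Fin nA × Fin nB)`, and operator tensor products are Kronecker products. -/
theorem stmt_15 (μ : ℝ) (hμ : μ ∈ Set.Ioo 0 (Real.pi / 2))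
    (c s α : ℝ) (hc : c = Real.cos μ) (hs : s = Real.sin μ) (hα : α = c / s)
    (ε : ℝ) (hε : 0 ≤ ε)
    (nA nB : ℕ)
    (M₁ M₂ : Matrix (Fin nA) (Fin nA) ℂ)
    (hM₁ : M₁.IsHermitian) (hM₁sq : M₁ * M₁ = 1)
    (hM₂ : M₂.IsHermitian) (hM₂sq : M₂ * M₂ = 1)
    (N₁ N₂ : Matrix (Fin nB) (Fin nB) ℂ)
    (hN₁ : N₁.IsHermitian) (hN₁sq : N₁ * N₁ = 1)
    (hN₂ : N₂.IsHermitian) (hN₂sq : N₂ * N₂ = 1)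
    (ψ : EuclideanSpace ℂ (Fin nA × Fin nB)) (hψ : ‖ψ‖ = 1)
    (hviol : 2 * Real.sqrt (1 + α ^ 2) - ε ≤
      (inner ℂ ψ (mApply ((α : ℂ) • (M₁ ⊗ₖ N₁) + (α : ℂ) • (M₁ ⊗ₖ N₂) +
        M₂ ⊗ₖ N₁ - M₂ ⊗ₖ N₂) ψ) : ℂ).re)
    (ZA XA ZB XB : Matrix (Fin nA × Fin nB) (Fin nA × Fin nB) ℂ)
    (hZA : ZA = M₁ ⊗ₖ (1 : Matrix (Fin nB) (Fin nB) ℂ))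
    (hXA : XA = M₂ ⊗ₖ (1 : Matrix (Fin nB) (Fin nB) ℂ))
    (hZB : ZB = ((2 * c : ℝ) : ℂ)⁻¹ • ((1 : Matrix (Fin nA) (Fin nA) ℂ) ⊗ₖ (N₁ + N₂)))
    (hXB : XB = ((2 * s : ℝ) : ℂ)⁻¹ • ((1 : Matrix (Fin nA) (Fin nA) ℂ) ⊗ₖ (N₁ - N₂))) :
    ‖mApply (ZA - ZB) ψ‖ ≤ Real.sqrt s / c * Real.sqrt ε ∧
    ‖mApply (XA - XB) ψ‖ ≤ Real.sqrt ε / Real.sqrt s ∧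
    ‖mApply (ZA * XB + XA * ZB) ψ‖ ≤ Real.sqrt ε / (c * Real.sqrt s) ∧
    ‖mApply (XA * (1 + ZB) - XB * (1 - ZA)) ψ‖ ≤ (c + 1) / (c * Real.sqrt s) * Real.sqrt ε ∧
    ‖mApply (ZA * (1 + XB) - ZB * (1 - XA)) ψ‖ ≤ (s + 1) / (c * Real.sqrt s) * Real.sqrt ε ∧
    ‖mApply (ZA * XA + XA * ZA) ψ‖ ≤ (1 + c + s) / (c * Real.sqrt s) * Real.sqrt ε ∧
    ‖mApply (XA * ZA + XB * ZB) ψ‖ ≤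
      (2 * s ^ 2 + c * s + c + s) / (c * s * Real.sqrt s) * Real.sqrt ε := by
  have hc0 : 0 < c := by
    rw [hc]; exact Real.cos_pos_of_mem_Ioo ⟨by linarith [hμ.1, Real.pi_pos], hμ.2⟩
  have hs0 : 0 < s := by
    rw [hs]; exact Real.sin_pos_of_pos_of_lt_pi hμ.1 (by linarith [hμ.2, Real.pi_pos])
  have hcs : c ^ 2 + s ^ 2 = 1 := by rw [hc, hs]; exact Real.cos_sq_add_sin_sq μ
  have hsq : Real.sqrt (1 + α ^ 2) = 1 / s := by
    rw [Real.sqrt_eq_iff_mul_self_eq (by positivity) (by positivity), hα]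
    field_simp
    linarith
  have hZB' : ZB = (2 * c)⁻¹ • ((1 : Matrix (Fin nA) (Fin nA) ℂ) ⊗ₖ (N₁ + N₂)) := by
    rw [hZB]; ext i j; simp
  have hXB' : XB = (2 * s)⁻¹ • ((1 : Matrix (Fin nA) (Fin nA) ℂ) ⊗ₖ (N₁ - N₂)) := by
    rw [hXB]; ext i j; simp
  have herm : ∀ {p q : ℕ} (A : Matrix (Fin p) (Fin p) ℂ) (B : Matrix (Fin q) (Fin q) ℂ),
      A.IsHermitian → B.IsHermitian → (A ⊗ₖ B).IsHermitian := by
    intro p q A B hA hB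
    unfold Matrix.IsHermitian
    rw [conjTranspose_kronecker, hA.eq, hB.eq]
  have hsm : ∀ (r : ℝ) (A : Matrix (Fin nA × Fin nB) (Fin nA × Fin nB) ℂ),
      A.IsHermitian → (r • A).IsHermitian := by
    intro r A hA
    unfold Matrix.IsHermitian
    rw [conjTranspose_smul, hA.eq, star_trivial]
  apply core c s ε hc0 hs0 hcs hε ZA XA ZB XB
  · rw [hZA, ← mul_kronecker_mul, hM₁sq, one_mul, one_kronecker_one]
  · rw [hXA, ← mul_kronecker_mul, hM₂sq, one_mul, one_kronecker_one]
  · rw [hZA]; exact herm _ _ hM₁ isHermitian_one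
  · rw [hXA]; exact herm _ _ hM₂ isHermitian_one
  · rw [hZB']; exact hsm _ _ (herm _ _ isHermitian_one (hN₁.add hN₂))
  · rw [hXB']; exact hsm _ _ (herm _ _ isHermitian_one (hN₁.sub hN₂))
  · rw [hZB', hZA]; simp [← mul_kronecker_mul]
  · rw [hZB', hXA]; simp [← mul_kronecker_mul]
  · rw [hXB', hZA]; simp [← mul_kronecker_mul]
  · rw [hXB', hXA]; simp [← mul_kronecker_mul]
  · rw [hXB', hZB']
    simp only [smul_mul_assoc, mul_smul_comm, ← mul_kronecker_mul, one_mul, smul_smul]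
    have e1 : c ^ 2 * ((2 * c)⁻¹ * (2 * c)⁻¹) = 1 / 4 := by field_simp; norm_num
    have e2 : s ^ 2 * ((2 * s)⁻¹ * (2 * s)⁻¹) = 1 / 4 := by field_simp; norm_num
    have e3 : (N₁ + N₂) * (N₁ + N₂) + (N₁ - N₂) * (N₁ - N₂) = (4 : ℝ) • 1 := by
      simp only [mul_add, add_mul, mul_sub, sub_mul, hN₁sq, hN₂sq]
      module
    rw [e1, e2, ← smul_add, ← kronecker_add, e3, kronecker_smul, smul_smul, one_kronecker_one]
    norm_num
  · rw [hXB', hZB']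
    simp only [smul_mul_assoc, mul_smul_comm, ← mul_kronecker_mul, one_mul, smul_smul]
    have e3 : (N₁ - N₂) * (N₁ + N₂) = (-1 : ℝ) • ((N₁ + N₂) * (N₁ - N₂)) := by
      simp only [mul_add, add_mul, mul_sub, sub_mul, hN₁sq, hN₂sq]
      module
    rw [e3, kronecker_smul, mul_comm (2 * s)⁻¹]
    module
  · exact hψ
  · have : (α : ℂ) • (M₁ ⊗ₖ N₁) + (α : ℂ) • (M₁ ⊗ₖ N₂) + M₂ ⊗ₖ N₁ - M₂ ⊗ₖ N₂ =
        (2 * c ^ 2 / s) • (ZA * ZB) + (2 * s) • (XA * XB) := by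
      rw [hZA, hXA, hZB', hXB']
      simp only [mul_smul_comm, ← mul_kronecker_mul, one_mul, mul_one, smul_smul]
      have e1 : 2 * c ^ 2 / s * (2 * c)⁻¹ = α := by rw [hα]; field_simp
      have e2 : 2 * s * (2 * s)⁻¹ = 1 := by field_simp
      rw [e1, e2, one_smul]
      ext i j
      simp [kroneckerMap_apply]
      ring
    rw [this, hsq] at hviol
    have e : 2 / s = 2 * (1 / s) := by ring
    rw [e]
    exact hviol
end
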